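/- arXiv:1701.04977 — 8 statements merged into one kernel-verified Lean document; each statement's English description precedes it below -/
import Mathlib

section
/- There exists a constant c > 0, depending only on 𝔞, the basis α_1, …, α_r, and ‖·‖, such that for every ε > 0 and every H ∈ ā⁺ there exists H_ε ∈ ā⁺_ε with H − H_ε ∈ ā⁺ and ‖H_ε‖ ≥ (1 − cε)‖H‖. -/
/-!
Independent functionals `α j` admit vectors `e j` with `α i (e j) = δᵢⱼ`, so the values `α j H` can
be changed one at a time. Subtracting `α j H • e j` for every `j` with `α j H < 2 * ε * ‖H‖` kills
the small values and leaves the others alone, and it moves `H` by at most `2 * ε * ‖H‖ * S`, where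
`S = ∑ j, ‖e j‖`. If `2 * S * ε ≤ 1`, the resulting vector has norm at most `2 * ‖H‖`, so its
nonzero values are at least `ε` times its norm; otherwise the zero vector will do.
-/

open Module (Dual)

theorem exists_biorthogonal_of_linearIndependent {K V ι : Type*} [Field K] [AddCommGroup V]
    [Module K V] [Finite ι] [DecidableEq ι] {α : ι → Dual K V} (hα : LinearIndependent K α) :
    ∃ e : ι → V, ∀ i j, α i (e j) = if i = j then 1 else 0 := by
  have exists_mem_ker (j : ι) : ∃ x, (∀ i ≠ j, α i x = 0) ∧ α j x ≠ 0 := by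
    by_contra! hker
    refine linearIndependent_iff_notMem_span.mp hα j ?_
    have hspan : α j ∈ Submodule.span K (Set.range fun i : {i // i ≠ j} ↦ α i) :=
      mem_span_of_iInf_ker_le_ker fun x hx ↦ hker x fun i hi ↦
        (Submodule.mem_iInf _).mp hx ⟨i, hi⟩
    refine Submodule.span_mono ?_ hspan
    rintro _ ⟨i, rfl⟩
    exact ⟨i, by simpa using i.2, rfl⟩
  choose x hx_ne hx_self using exists_mem_ker
  refine ⟨fun j ↦ (α j (x j))⁻¹ • x j, fun i j ↦ ?_⟩
  rcases eq_or_ne i j with rfl | hij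
  · simp [hx_self i]
  · simp [hx_ne j i hij, hij]

section Truncation

variable {V ι : Type*} [Fintype ι]

/-- The truncation of `H` at level `δ`: the component along `e j` is removed whenever the
coordinate `α j H` is below `δ`. It is meant for `e` biorthogonal to `α`, and for `H` with
nonnegative coordinates: negative ones are removed whatever their size. -/
noncomputable def coordTruncation [AddCommGroup V] [Module ℝ V] (α : ι → Dual ℝ V) (e : ι → V)
    (δ : ℝ) (H : V) : V :=
  H - ∑ j with α j H < δ, α j H • e j

theorem apply_coordTruncation [AddCommGroup V] [Module ℝ V] [DecidableEq ι] {α : ι → Dual ℝ V}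
    {e : ι → V} (he : ∀ i j, α i (e j) = if i = j then 1 else 0) (δ : ℝ) (H : V) (i : ι) :
    α i (coordTruncation α e δ H) = if α i H < δ then 0 else α i H := by
  have hsum : α i (∑ j with α j H < δ, α j H • e j) = if α i H < δ then α i H else 0 := by
    simp [he]
  rw [coordTruncation, map_sub, hsum]
  split_ifs <;> simp

theorem norm_sub_coordTruncation_le [SeminormedAddCommGroup V] [NormedSpace ℝ V]
    {α : ι → Dual ℝ V} (e : ι → V) {δ : ℝ} (hδ : 0 ≤ δ) {H : V} (hH : ∀ j, 0 ≤ α j H) :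
    ‖H - coordTruncation α e δ H‖ ≤ δ * ∑ j, ‖e j‖ := by
  rw [coordTruncation, sub_sub_cancel]
  calc ‖∑ j with α j H < δ, α j H • e j‖
      ≤ ∑ j with α j H < δ, δ * ‖e j‖ := by
        refine norm_sum_le_of_le _ fun j hj ↦ ?_
        rw [norm_smul, Real.norm_of_nonneg (hH j)]
        gcongr
        exact (Finset.mem_filter.mp hj).2.le
    _ ≤ ∑ j, δ * ‖e j‖ :=
        Finset.sum_le_univ_sum_of_nonneg fun j ↦ by positivity
    _ = δ * ∑ j, ‖e j‖ := (Finset.mul_sum ..).symm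

end Truncation

theorem stmt_0_general {V ι : Type*} [SeminormedAddCommGroup V] [NormedSpace ℝ V] [Finite ι]
    {α : ι → Dual ℝ V} (hα : LinearIndependent ℝ α) :
    ∃ c : ℝ, 0 < c ∧ ∀ ε : ℝ, 0 < ε → ∀ H : V, (∀ j, 0 ≤ α j H) →
      ∃ Hε : V,
        (∀ j, 0 ≤ α j Hε) ∧
        (∀ j, 0 < α j Hε → ε * ‖Hε‖ ≤ α j Hε) ∧
        (∀ j, 0 ≤ α j (H - Hε)) ∧
        (1 - c * ε) * ‖H‖ ≤ ‖Hε‖ := by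
  classical
  have := Fintype.ofFinite ι
  obtain ⟨e, he⟩ := exists_biorthogonal_of_linearIndependent hα
  set S := ∑ j, ‖e j‖
  refine ⟨2 * S + 1, by positivity, fun ε hε H hH ↦ ?_⟩
  rcases lt_or_ge 1 (2 * S * ε) with hlarge | hsmall
  · refine ⟨0, by simp, by simp, by simpa using hH, ?_⟩
    rw [norm_zero]
    exact mul_nonpos_of_nonpos_of_nonneg (by linarith) (norm_nonneg H)
  set T := coordTruncation α e (2 * ε * ‖H‖) H
  have hT (j : ι) : α j T = if α j H < 2 * ε * ‖H‖ then 0 else α j H :=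
    apply_coordTruncation he _ H j
  have hdist : ‖H - T‖ ≤ 2 * ε * ‖H‖ * S := norm_sub_coordTruncation_le e (by positivity) hH
  have hdist_le_norm : ‖H - T‖ ≤ ‖H‖ :=
    calc ‖H - T‖ ≤ 2 * S * ε * ‖H‖ := by linarith
      _ ≤ ‖H‖ := mul_le_of_le_one_left (norm_nonneg H) hsmall
  have hnorm : ε * ‖T‖ ≤ 2 * ε * ‖H‖ :=
    calc ε * ‖T‖ ≤ ε * (2 * ‖H‖) := by
          gcongr
          linarith [norm_le_norm_add_norm_sub H T]
      _ = 2 * ε * ‖H‖ := by ring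
  refine ⟨T, fun j ↦ ?_, fun j ↦ ?_, fun j ↦ ?_, ?_⟩
  · grind
  · grind
  · grind
  · have hεH : 0 ≤ ε * ‖H‖ := by positivity
    linarith [norm_le_norm_add_norm_sub' H T]

/-- `V` (playing the role of `𝔞`) is a finite-dimensional real normed vector space of
dimension `r ≥ 1`, and `α` is a basis of its dual space.  The closed cone
`ā⁺ = {H | ∀ j, 0 ≤ α j H}`, and `ā⁺_ε = {H ∈ ā⁺ | ∀ j, α j H > 0 → α j H ≥ ε‖H‖}`.
There is a constant `c > 0` (depending only on the data fixed here) such that for every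
`ε > 0` and every `H ∈ ā⁺` there is `Hε ∈ ā⁺_ε` with `H - Hε ∈ ā⁺` and
`‖Hε‖ ≥ (1 - c·ε)‖H‖`. -/
theorem stmt_0 {V : Type*} [NormedAddCommGroup V] [NormedSpace ℝ V] [FiniteDimensional ℝ V]
    {r : ℕ} (hr : 1 ≤ r) (hrank : Module.finrank ℝ V = r)
    (α : Module.Basis (Fin r) ℝ (Module.Dual ℝ V)) :
    ∃ c : ℝ, 0 < c ∧ ∀ ε : ℝ, 0 < ε → ∀ H : V, (∀ j : Fin r, 0 ≤ α j H) →
      ∃ Hε : V,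
        (∀ j : Fin r, 0 ≤ α j Hε) ∧
        (∀ j : Fin r, 0 < α j Hε → ε * ‖Hε‖ ≤ α j Hε) ∧
        (∀ j : Fin r, 0 ≤ α j (H - Hε)) ∧
        (1 - c * ε) * ‖H‖ ≤ ‖Hε‖ := by
  exact stmt_0_general α.linearIndependent
end

section
/- For every g ∈ G and every measurable Γ-invariant f : G → ℂ with ∫_F |f|² dμ < ∞, the set Γ ∩ gBBg⁻¹ is finite and ∫_B |f(gh)|² dμ(h) ≤ #(Γ ∩ gBBg⁻¹) · ∫_F |f|² dμ. -/
open MeasureTheory ENNReal NNReal Pointwise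

/-!
The integral of an invariant `φ` over `A` unfolds to the sum over `γ` of the integrals of `φ` over
`γ • A ∩ F`, so only the multiplicity of the overlaps of the translates `γ • A` matters. If `x` lies
in both `γ • A` and `γ₀ • A`, then `γ⁻¹ * γ₀` moves `A` to a set meeting `A`; hence no point lies in
more translates than there are elements `γ` with `γ • A` meeting `A`. For left multiplication
these are the elements of `Γ ∩ A * A⁻¹`, and the theorem is the case `A = g • B`.
-/

section Action

variable {Γ X : Type*} [Group Γ] [MulAction Γ X]

theorem encard_setOf_mem_smul_set_le (A : Set X) (x : X) :
    {γ : Γ | x ∈ γ • A}.encard ≤ {γ : Γ | (γ • A ∩ A).Nonempty}.encard := by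
  obtain hempty | ⟨γ₀, hγ₀⟩ := {γ : Γ | x ∈ γ • A}.eq_empty_or_nonempty
  · simp [hempty]
  · refine Set.encard_le_encard_of_injOn (f := fun γ ↦ γ⁻¹ * γ₀) (fun γ hγ ↦ ⟨γ⁻¹ • x, ?_, ?_⟩)
      (fun _ _ _ _ h ↦ inv_injective (mul_right_cancel h))
    · rw [mul_smul]
      exact Set.smul_mem_smul_set hγ₀
    · exact Set.mem_smul_set_iff_inv_smul_mem.1 hγ

variable [MeasurableSpace X] [MeasurableConstSMul Γ X] {μ : Measure X} {A F : Set X}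

theorem tsum_setLIntegral_smul_le_ncard_mul (hA : MeasurableSet A)
    (hfin : {γ : Γ | (γ • A ∩ A).Nonempty}.Finite) (φ : X → ℝ≥0∞) :
    ∑' γ : Γ, ∫⁻ x in γ • A, φ x ∂μ ≤
      {γ : Γ | (γ • A ∩ A).Nonempty}.ncard * ∫⁻ x, φ x ∂μ := by
  set N := {γ : Γ | (γ • A ∩ A).Nonempty}.ncard
  have overlap_le (x : X) : {γ : Γ | x ∈ γ • A}.encard ≤ N :=
    (encard_setOf_mem_smul_set_le A x).trans_eq hfin.cast_ncard_eq.symm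
  calc ∑' γ : Γ, ∫⁻ x in γ • A, φ x ∂μ
      = ∫⁻ x, φ x ∂Measure.sum fun γ : Γ ↦ μ.restrict (γ • A) := (lintegral_sum_measure _ _).symm
    _ ≤ ∫⁻ x, φ x ∂(N • μ.restrict (⋃ γ : Γ, γ • A)) :=
        lintegral_mono' (Measure.sum_restrict_le (fun γ ↦ hA.const_smul γ) overlap_le) le_rfl
    _ = N * ∫⁻ x in ⋃ γ : Γ, γ • A, φ x ∂μ := by rw [lintegral_smul_measure, nsmul_eq_mul]
    _ ≤ N * ∫⁻ x, φ x ∂μ := by gcongr; exact Measure.restrict_le_self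

variable [Countable Γ] [SMulInvariantMeasure Γ X μ]

theorem setLIntegral_le_ncard_mul_setLIntegral_fundamentalDomain
    (hF : IsFundamentalDomain Γ F μ) (hA : MeasurableSet A)
    (hfin : {γ : Γ | (γ • A ∩ A).Nonempty}.Finite)
    {φ : X → ℝ≥0∞} (hφ : ∀ (γ : Γ) (x : X), φ (γ • x) = φ x) :
    ∫⁻ x in A, φ x ∂μ ≤
      {γ : Γ | (γ • A ∩ A).Nonempty}.ncard * ∫⁻ x in F, φ x ∂μ :=
  calc ∫⁻ x in A, φ x ∂μ
      = ∑' γ : Γ, ∫⁻ x in γ • A, φ x ∂μ.restrict F := by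
        rw [hF.setLIntegral_eq_tsum']
        simp only [hφ, Measure.restrict_restrict (hA.const_smul _)]
    _ ≤ {γ : Γ | (γ • A ∩ A).Nonempty}.ncard * ∫⁻ x in F, φ x ∂μ :=
        tsum_setLIntegral_smul_le_ncard_mul hA hfin φ

end Action

section Group

variable {G : Type*} [Group G]

theorem image_coe_setOf_smul_inter_nonempty (Γ : Subgroup G) (A C : Set G) :
    ((↑) : Γ → G) '' {γ : Γ | (γ • A ∩ C).Nonempty} = (Γ : Set G) ∩ (C * A⁻¹) := by
  have meets_iff (γ : Γ) : (γ • A ∩ C).Nonempty ↔ (γ : G) ∈ C * A⁻¹ := by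
    rw [Subgroup.smul_def, Set.smul_inter_nonempty_iff]
    simp only [← div_eq_mul_inv, Set.mem_div, ← exists_and_left, and_assoc]
  ext x
  simp [meets_iff, and_comm]

theorem image_conj_mul_inv (g : G) (B C : Set G) :
    (fun b ↦ g * b * g⁻¹) '' (B * C⁻¹) = g • B * (g • C)⁻¹ := by
  simp only [← Set.image_smul, ← Set.image_inv_eq_inv, ← Set.image2_mul, Set.image_image2,
    Set.image2_image_left, Set.image2_image_right, smul_eq_mul, mul_inv_rev, mul_assoc]

theorem finite_subgroup_inter_of_isCompact [TopologicalSpace G] [IsTopologicalGroup G] [T2Space G]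
    (Γ : Subgroup G) [DiscreteTopology Γ] {K : Set G} (hK : IsCompact K) :
    ((Γ : Set G) ∩ K).Finite :=
  have Γ_discrete : IsDiscrete (Γ : Set G) := ⟨‹DiscreteTopology Γ›⟩
  (hK.inter_left Γ.isClosed_of_discrete).finite (Γ_discrete.mono Set.inter_subset_left)

theorem setLIntegral_comp_mul_left [MeasurableSpace G] [MeasurableMul G] (μ : Measure G)
    [μ.IsMulLeftInvariant] (φ : G → ℝ≥0∞) (g : G) (B : Set G) :
    ∫⁻ h in B, φ (g * h) ∂μ = ∫⁻ x in g • B, φ x ∂μ :=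
  (measurePreserving_mul_left μ g).setLIntegral_comp_emb (measurableEmbedding_mulLeft g) φ B

end Group

theorem stmt_1_general {G : Type*} [Group G] [TopologicalSpace G] [IsTopologicalGroup G]
    [T2Space G] [MeasurableSpace G] [BorelSpace G]
    (μ : Measure G) [μ.IsMulLeftInvariant]
    (Γ : Subgroup G) [Countable Γ] [DiscreteTopology Γ]
    {F : Set G} (hF : IsFundamentalDomain Γ F μ) {B : Set G} (hB : IsCompact B)
    (g : G) {φ : G → ℝ≥0∞} (hφ : ∀ γ ∈ Γ, ∀ x : G, φ (γ * x) = φ x) :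
    ((Γ : Set G) ∩ ((fun b => g * b * g⁻¹) '' (B * B⁻¹))).Finite ∧
      ∫⁻ h in B, φ (g * h) ∂μ ≤
        ((Γ : Set G) ∩ ((fun b => g * b * g⁻¹) '' (B * B⁻¹))).ncard * ∫⁻ x in F, φ x ∂μ := by
  have hA : IsCompact (g • B) := hB.smul g
  have hfin := finite_subgroup_inter_of_isCompact Γ (hA.mul hA.inv)
  rw [image_conj_mul_inv]
  refine ⟨hfin, ?_⟩
  rw [← image_coe_setOf_smul_inter_nonempty] at hfin ⊢
  rw [setLIntegral_comp_mul_left, Set.ncard_image_of_injective _ Subtype.val_injective]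
  exact setLIntegral_le_ncard_mul_setLIntegral_fundamentalDomain hF hA.measurableSet
    (hfin.of_finite_image Subtype.val_injective.injOn) fun γ x ↦ hφ γ γ.2 x

/-- `G` is a locally compact Hausdorff topological group with left Haar measure `μ`,
`Γ` is a countable discrete subgroup, `F` is a measurable fundamental domain for the
left-translation action of `Γ` on `G`, and `B` is a compact symmetric subset.
For every `g ∈ G` and every measurable `Γ`-invariant `f : G → ℂ` with
`∫_F |f|² dμ < ∞`, the set `Γ ∩ gBBg⁻¹` is finite and
`∫_B |f(gh)|² dμ(h) ≤ #(Γ ∩ gBBg⁻¹) · ∫_F |f|² dμ`. -/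
theorem stmt_1 {G : Type*} [Group G] [TopologicalSpace G] [IsTopologicalGroup G]
    [T2Space G] [LocallyCompactSpace G] [MeasurableSpace G] [BorelSpace G]
    (μ : Measure G) [μ.IsHaarMeasure]
    (Γ : Subgroup G) [Countable Γ] [DiscreteTopology Γ]
    (F : Set G) (hF : IsFundamentalDomain Γ F μ)
    (B : Set G) (hBc : IsCompact B) (hBsymm : B = B⁻¹)
    (g : G) (f : G → ℂ) (hf : Measurable f)
    (hinv : ∀ γ ∈ Γ, ∀ x : G, f (γ * x) = f x)
    (hL2 : (∫⁻ x in F, (‖f x‖₊ : ℝ≥0∞) ^ 2 ∂μ) < ⊤) :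
    ((Γ : Set G) ∩ ((fun b => g * b * g⁻¹) '' (B * B))).Finite ∧
      (∫⁻ h in B, (‖f (g * h)‖₊ : ℝ≥0∞) ^ 2 ∂μ) ≤
        (((Γ : Set G) ∩ ((fun b => g * b * g⁻¹) '' (B * B))).ncard : ℝ≥0∞) *
          ∫⁻ x in F, (‖f x‖₊ : ℝ≥0∞) ^ 2 ∂μ := by
  have hφ : ∀ γ ∈ Γ, ∀ x, (‖f (γ * x)‖₊ : ℝ≥0∞) ^ 2 = (‖f x‖₊ : ℝ≥0∞) ^ 2 :=
    fun γ hγ x ↦ by rw [hinv γ hγ x]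
  simpa only [← hBsymm] using stmt_1_general μ Γ hF hBc g hφ
end

section
/- For every compact subset C ⊆ G there exists a constant κ > 0, depending only on G, Γ, B and C, such that w_B(xg) ≤ κ·w_B(x) for all x ∈ G and all g ∈ C. -/
open MeasureTheory ENNReal NNReal Pointwise

/-- The quantity `w_B(x)`: the supremum, over all measurable `Γ`-invariant `f : G → ℂ`
with `∫_F |f|² dμ ≤ 1`, of `(∫_B |f(xh)|² dμ(h))^{1/2}`. -/
noncomputable def wB {G : Type*} [Group G] [MeasurableSpace G]
    (Γ : Subgroup G) (F : Set G) (μ : Measure G) (B : Set G) (x : G) : ℝ≥0∞ :=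
  ⨆ f : {f : G → ℂ // Measurable f ∧ (∀ γ ∈ Γ, ∀ z : G, f (γ * z) = f z) ∧
      (∫⁻ z in F, (‖f z‖₊ : ℝ≥0∞) ^ 2 ∂μ) ≤ 1},
    (∫⁻ h in B, (‖f.1 (x * h)‖₊ : ℝ≥0∞) ^ 2 ∂μ) ^ (1 / 2 : ℝ)

/-!
By left invariance of `μ`, `w_B(xg) = w_{gB}(x)`. By right invariance, `w_{Bk} = w_B`: right
translation by `k` permutes the admissible functions, since it commutes with the action of `Γ` and
so carries `F` to another fundamental domain, on which a `Γ`-invariant function has the same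
integral. As `w_B²` is monotone and subadditive in `B`, covering the compact set `CB` by `n` right
translates of `B` gives `w_B(xg)² ≤ n w_B(x)²` for all `g ∈ C`.
-/

section SetLIntegralSMul

variable {H α : Type*} [Group H] [MulAction H α] [MeasurableSpace α] [MeasurableConstSMul H α]
  {μ : Measure α} [SMulInvariantMeasure H α μ]

lemma setLIntegral_comp_smul (h : H) (f : α → ℝ≥0∞) (s : Set α) :
    ∫⁻ x in s, f (h • x) ∂μ = ∫⁻ x in h • s, f x ∂μ :=
  (measurePreserving_smul h μ).setLIntegral_comp_emb (measurableEmbedding_const_smul h) f s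

lemma setLIntegral_fundamentalDomain_comp_smul_of_comm {Γ : Type*} [Group Γ] [Countable Γ]
    [MulAction Γ α] [MeasurableConstSMul Γ α] [SMulInvariantMeasure Γ α μ] [SMulCommClass H Γ α]
    {F : Set α} (hF : IsFundamentalDomain Γ F μ) {f : α → ℝ≥0∞}
    (hf : ∀ (γ : Γ) (x : α), f (γ • x) = f x) (h : H) :
    ∫⁻ x in F, f (h • x) ∂μ = ∫⁻ x in F, f x ∂μ := by
  rw [setLIntegral_comp_smul, (hF.smul_of_comm h).setLIntegral_eq hF f hf]

end SetLIntegralSMul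

lemma setLIntegral_biUnion_finset_le {α ι : Type*} [MeasurableSpace α] (μ : Measure α)
    (t : Finset ι) (s : ι → Set α) (f : α → ℝ≥0∞) :
    ∫⁻ x in ⋃ i ∈ t, s i, f x ∂μ ≤ ∑ i ∈ t, ∫⁻ x in s i, f x ∂μ := by
  classical
  induction t using Finset.induction_on with
  | empty => simp
  | insert i t hi ih =>
    rw [Finset.set_biUnion_insert, Finset.sum_insert hi]
    exact (lintegral_union_le f _ _).trans (by gcongr)

section WB

variable {G : Type*} [Group G] [MeasurableSpace G] {Γ : Subgroup G} {F : Set G} {μ : Measure G}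

lemma wB_le_iff {B : Set G} {x : G} {a : ℝ≥0∞} :
    wB Γ F μ B x ≤ a ↔ ∀ f : G → ℂ, Measurable f → (∀ γ ∈ Γ, ∀ z : G, f (γ * z) = f z) →
      ∫⁻ z in F, (‖f z‖₊ : ℝ≥0∞) ^ 2 ∂μ ≤ 1 →
      ∫⁻ h in B, (‖f (x * h)‖₊ : ℝ≥0∞) ^ 2 ∂μ ≤ a ^ 2 := by
  simp only [wB, iSup_le_iff, Subtype.forall, and_imp, one_div,
    ENNReal.rpow_inv_le_iff two_pos, ENNReal.rpow_ofNat]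

lemma setLIntegral_le_wB_sq {f : G → ℂ} (hf : Measurable f)
    (hΓ : ∀ γ ∈ Γ, ∀ z : G, f (γ * z) = f z) (hF : ∫⁻ z in F, (‖f z‖₊ : ℝ≥0∞) ^ 2 ∂μ ≤ 1)
    (B : Set G) (x : G) :
    ∫⁻ h in B, (‖f (x * h)‖₊ : ℝ≥0∞) ^ 2 ∂μ ≤ wB Γ F μ B x ^ 2 :=
  wB_le_iff.1 le_rfl f hf hΓ hF

lemma wB_mono {S T : Set G} (hST : S ⊆ T) (x : G) : wB Γ F μ S x ≤ wB Γ F μ T x :=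
  wB_le_iff.2 fun _ hf hΓ hF ↦
    (lintegral_mono_set hST).trans (setLIntegral_le_wB_sq hf hΓ hF T x)

lemma wB_sq_biUnion_finset_le {ι : Type*} (t : Finset ι) (S : ι → Set G) (x : G) :
    wB Γ F μ (⋃ i ∈ t, S i) x ^ 2 ≤ ∑ i ∈ t, wB Γ F μ (S i) x ^ 2 := by
  rw [← ENNReal.rpow_ofNat, ← ENNReal.le_rpow_inv_iff two_pos, wB_le_iff]
  intro f hf hΓ hF
  rw [← ENNReal.rpow_ofNat _ 2, ENNReal.rpow_inv_rpow two_ne_zero]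
  exact (setLIntegral_biUnion_finset_le μ t S _).trans
    (Finset.sum_le_sum fun i _ ↦ setLIntegral_le_wB_sq hf hΓ hF (S i) x)

variable [MeasurableMul G] [μ.IsMulLeftInvariant]

lemma wB_mul_right (B : Set G) (x g : G) : wB Γ F μ B (x * g) = wB Γ F μ (g • B) x := by
  simp only [wB, ← setLIntegral_comp_smul, smul_eq_mul, mul_assoc]

variable [μ.IsMulRightInvariant] [Countable Γ]

lemma wB_op_smul_le (hF : IsFundamentalDomain Γ F μ) (k : Gᵐᵒᵖ) (B : Set G) (x : G) :
    wB Γ F μ (k • B) x ≤ wB Γ F μ B x := by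
  refine wB_le_iff.2 fun f hf hΓ hF1 ↦ ?_
  have translate_norm : ∫⁻ z in F, (‖f (k • z)‖₊ : ℝ≥0∞) ^ 2 ∂μ ≤ 1 := by
    rwa [setLIntegral_fundamentalDomain_comp_smul_of_comm hF
      (f := fun z ↦ (‖f z‖₊ : ℝ≥0∞) ^ 2) fun γ z ↦ by
        rw [Subgroup.smul_def, smul_eq_mul, hΓ γ γ.2]]
  have translate_invariant : ∀ γ ∈ Γ, ∀ z : G, f (k • (γ * z)) = f (k • z) := fun γ hγ z ↦ by
    rw [← mul_smul_comm, hΓ γ hγ]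
  rw [← setLIntegral_comp_smul]
  simpa only [Function.comp_apply, mul_smul_comm] using
    setLIntegral_le_wB_sq (hf.comp (measurable_const_smul k)) translate_invariant translate_norm B x

lemma wB_op_smul (hF : IsFundamentalDomain Γ F μ) (k : Gᵐᵒᵖ) (B : Set G) (x : G) :
    wB Γ F μ (k • B) x = wB Γ F μ B x :=
  (wB_op_smul_le hF k B x).antisymm <| by simpa using wB_op_smul_le hF k⁻¹ (k • B) x

lemma wB_mul_le_of_smul_subset_biUnion (hF : IsFundamentalDomain Γ F μ) {B : Set G}
    {t : Finset Gᵐᵒᵖ} {g : G} (hg : g • B ⊆ ⋃ k ∈ t, k • B) (x : G) :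
    wB Γ F μ B (x * g) ≤ NNReal.sqrt t.card * wB Γ F μ B x := by
  rw [← ENNReal.pow_le_pow_left_iff two_ne_zero]
  calc wB Γ F μ B (x * g) ^ 2
      = wB Γ F μ (g • B) x ^ 2 := by rw [wB_mul_right]
    _ ≤ wB Γ F μ (⋃ k ∈ t, k • B) x ^ 2 := by gcongr; exact wB_mono hg x
    _ ≤ ∑ k ∈ t, wB Γ F μ (k • B) x ^ 2 := wB_sq_biUnion_finset_le t _ x
    _ = t.card * wB Γ F μ B x ^ 2 := by simp only [wB_op_smul hF, Finset.sum_const, nsmul_eq_mul]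
    _ = (NNReal.sqrt t.card * wB Γ F μ B x) ^ 2 := by
      rw [mul_pow, ← ENNReal.coe_pow, NNReal.sq_sqrt, ENNReal.coe_natCast]

end WB

theorem stmt_2_general {G : Type*} [Group G] [TopologicalSpace G] [ContinuousMul G]
    [MeasurableSpace G] [BorelSpace G] {B C : Set G} (hBc : IsCompact B)
    (hBint : (interior B).Nonempty) (hC : IsCompact C) :
    ∃ κ : ℝ≥0, 0 < κ ∧ ∀ (μ : Measure G) [μ.IsMulLeftInvariant] [μ.IsMulRightInvariant]
      (Γ : Subgroup G) [Countable Γ] (F : Set G), IsFundamentalDomain Γ F μ →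
      ∀ x : G, ∀ g ∈ C, wB Γ F μ B (x * g) ≤ κ * wB Γ F μ B x := by
  obtain ⟨t, ht⟩ := (hC.mul hBc).exists_finite_cover_smul Gᵐᵒᵖ isOpen_interior hBint
  refine ⟨NNReal.sqrt t.card + 1, by positivity, fun μ _ _ Γ _ F hF x g hg ↦ ?_⟩
  have translate_subset : g • B ⊆ ⋃ k ∈ t, k • B :=
    (Set.smul_set_subset_mul hg).trans <| ht.trans <|
      Set.iUnion₂_mono fun k _ ↦ Set.smul_set_mono interior_subset
  refine (wB_mul_le_of_smul_subset_biUnion hF translate_subset x).trans ?_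
  gcongr
  exact le_self_add

/-- `G` is a locally compact Hausdorff unimodular topological group with Haar measure `μ`,
`Γ` a countable discrete subgroup, `F` a measurable fundamental domain for the
left-translation action of `Γ`, and `B` a compact symmetric neighborhood of the identity.
For every compact `C ⊆ G` there is `κ > 0` (depending only on `G, Γ, B, C`) with
`w_B(xg) ≤ κ·w_B(x)` for all `x ∈ G`, `g ∈ C`. -/
theorem stmt_2 {G : Type*} [Group G] [TopologicalSpace G] [IsTopologicalGroup G]
    [T2Space G] [LocallyCompactSpace G] [MeasurableSpace G] [BorelSpace G]
    (μ : Measure G) [μ.IsHaarMeasure] [μ.IsMulRightInvariant]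
    (Γ : Subgroup G) [Countable Γ] [DiscreteTopology Γ]
    (F : Set G) (hF : IsFundamentalDomain Γ F μ)
    (B : Set G) (hBc : IsCompact B) (hBsymm : B = B⁻¹) (hBnhds : B ∈ nhds (1 : G))
    (C : Set G) (hC : IsCompact C) :
    ∃ κ : ℝ≥0, 0 < κ ∧ ∀ x : G, ∀ g ∈ C, wB Γ F μ B (x * g) ≤ κ * wB Γ F μ B x := by
  obtain ⟨κ, hκ, hle⟩ := stmt_2_general hBc ⟨1, mem_interior_iff_mem_nhds.2 hBnhds⟩ hC
  exact ⟨κ, hκ, hle μ Γ F hF⟩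
end

section
/- The limit L := lim_{t→−∞} e^{−λt} f(t) exists in E; for every t ≤ 0 the Bochner integral ∫_{−∞}^{t} e^{λ(t−s)} ψ(s) ds converges absolutely, f(t) = e^{λt} L + ∫_{−∞}^{t} e^{λ(t−s)} ψ(s) ds, and ‖f(t) − e^{λt} L‖ ≤ C e^{γt}/(γ − Re λ). -/
open MeasureTheory Filter

/-!
Multiplying by the integrating factor `e^{-λt}` reduces the equation to `g' = e^{-λt} ψ` for
`g t = e^{-λt} f t`, and `‖g' t‖ ≤ C e^{(γ - Re λ)t}` with positive rate `γ - Re λ`. Being a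
derivative, `g'` is measurable, hence integrable near `-∞`, so `g` has a limit `L` there and
`g t - L = ∫_{-∞}^t g'`. Multiplying back by `e^{λt}` gives the formula for `f`, and integrating the
exponential bound gives the estimate.
-/

theorem aestronglyMeasurable_restrict_of_hasDerivAt {𝕜 F : Type*} [NontriviallyNormedField 𝕜]
    [LocallyCompactSpace 𝕜] [MeasurableSpace 𝕜] [OpensMeasurableSpace 𝕜] [NormedAddCommGroup F]
    [NormedSpace 𝕜 F] [CompleteSpace F] [SecondCountableTopologyEither 𝕜 F] {g g' : 𝕜 → F}
    {s : Set 𝕜} {μ : Measure 𝕜} (hs : MeasurableSet s) (hg : ∀ x ∈ s, HasDerivAt g (g' x) x) :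
    AEStronglyMeasurable g' (μ.restrict s) :=
  (aestronglyMeasurable_deriv g _).congr <|
    (ae_restrict_mem hs).mono fun x hx => (hg x hx).deriv

section ExponentialBound

variable {F : Type*} [NormedAddCommGroup F] {g g' : ℝ → F} {a r C : ℝ}

theorem integrableOn_Iic_of_norm_le_mul_exp (hr : 0 < r)
    (hg : AEStronglyMeasurable g (volume.restrict (Set.Iic a)))
    (hbound : ∀ s ≤ a, ‖g s‖ ≤ C * Real.exp (r * s)) : IntegrableOn g (Set.Iic a) :=
  ((integrableOn_exp_mul_Iic hr a).const_mul C).mono' hg <|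
    (ae_restrict_mem measurableSet_Iic).mono hbound

variable [NormedSpace ℝ F]

theorem norm_integral_Iic_le_of_norm_le_mul_exp (hr : 0 < r)
    (hbound : ∀ s ≤ a, ‖g s‖ ≤ C * Real.exp (r * s)) :
    ‖∫ s in Set.Iic a, g s‖ ≤ C * Real.exp (r * a) / r :=
  calc
    ‖∫ s in Set.Iic a, g s‖ ≤ ∫ s in Set.Iic a, C * Real.exp (r * s) :=
      norm_integral_le_of_norm_le ((integrableOn_exp_mul_Iic hr a).const_mul C) <|
        (ae_restrict_mem measurableSet_Iic).mono hbound
    _ = C * Real.exp (r * a) / r := by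
      rw [integral_const_mul, integral_exp_mul_Iic hr, mul_div_assoc]

theorem exists_tendsto_atBot_and_integral_Iic_eq_sub [CompleteSpace F] (hr : 0 < r)
    (hg : ∀ s ≤ a, HasDerivAt g (g' s) s) (hbound : ∀ s ≤ a, ‖g' s‖ ≤ C * Real.exp (r * s)) :
    ∃ L : F, Tendsto g atBot (nhds L) ∧ IntegrableOn g' (Set.Iic a) ∧
      ∀ t ≤ a, ∫ s in Set.Iic t, g' s = g t - L := by
  have hint : IntegrableOn g' (Set.Iic a) :=
    integrableOn_Iic_of_norm_le_mul_exp hr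
      (aestronglyMeasurable_restrict_of_hasDerivAt measurableSet_Iic hg) hbound
  have hlim := tendsto_limUnder_of_hasDerivAt_of_integrableOn_Iic hg hint
  exact ⟨_, hlim, hint, fun t ht => integral_Iic_of_hasDerivAt_of_tendsto'
    (fun s hs => hg s (hs.trans ht)) (hint.mono_set (Set.Iic_subset_Iic.2 ht)) hlim⟩

end ExponentialBound

section IntegratingFactor

variable {E : Type*} [NormedAddCommGroup E] [NormedSpace ℂ E]

theorem norm_exp_mul_ofReal_smul (z : ℂ) (t : ℝ) (v : E) :
    ‖Complex.exp (z * t) • v‖ = Real.exp (z.re * t) * ‖v‖ := by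
  rw [norm_smul, Complex.norm_exp, Complex.re_mul_ofReal]

theorem norm_exp_neg_mul_smul_le {z : ℂ} {C γ s : ℝ} {v : E} (hv : ‖v‖ ≤ C * Real.exp (γ * s)) :
    ‖Complex.exp (-(z * s)) • v‖ ≤ C * Real.exp ((γ - z.re) * s) :=
  calc
    ‖Complex.exp (-(z * s)) • v‖ = Real.exp (-z.re * s) * ‖v‖ := by
      rw [← neg_mul, norm_exp_mul_ofReal_smul, Complex.neg_re]
    _ ≤ Real.exp (-z.re * s) * (C * Real.exp (γ * s)) := by gcongr
    _ = C * Real.exp ((γ - z.re) * s) := by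
      rw [mul_left_comm, ← Real.exp_add]
      ring_nf

theorem exp_mul_smul_exp_neg_mul_smul (z : ℂ) (t s : ℝ) (v : E) :
    Complex.exp (z * t) • Complex.exp (-(z * s)) • v = Complex.exp (z * (t - s)) • v := by
  rw [smul_smul, ← Complex.exp_add, ← sub_eq_add_neg, ← mul_sub]

theorem hasDerivAt_exp_neg_mul_smul {z : ℂ} {f : ℝ → E} {v : E} {t : ℝ}
    (hf : HasDerivAt f (z • f t + v) t) :
    HasDerivAt (fun s : ℝ => Complex.exp (-(z * s)) • f s) (Complex.exp (-(z * t)) • v) t := by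
  have hexp : HasDerivAt (fun s : ℝ => Complex.exp (-(z * s)))
      (Complex.exp (-(z * t)) * -(z * 1)) t :=
    (Complex.ofRealCLM.hasDerivAt.const_mul z).neg.cexp
  exact (hexp.smul hf).congr_deriv (by module)

end IntegratingFactor

theorem stmt_3_general {E : Type*} [NormedAddCommGroup E] [NormedSpace ℂ E] [CompleteSpace E]
    {lam : ℂ} {C γ a : ℝ} (hγ : lam.re < γ) {ψ f : ℝ → E}
    (hψ : ∀ s ≤ a, ‖ψ s‖ ≤ C * Real.exp (γ * s))
    (hf : ∀ t ≤ a, HasDerivAt f (lam • f t + ψ t) t) :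
    ∃ L : E, Tendsto (fun t : ℝ => Complex.exp (-(lam * t)) • f t) atBot (nhds L) ∧
      ∀ t ≤ a,
        IntegrableOn (fun s : ℝ => Complex.exp (lam * (t - s)) • ψ s) (Set.Iic t) ∧
        (f t = Complex.exp (lam * t) • L +
          ∫ s in Set.Iic t, Complex.exp (lam * (t - s)) • ψ s) ∧
        ‖f t - Complex.exp (lam * t) • L‖ ≤ C * Real.exp (γ * t) / (γ - lam.re) := by
  have hr : 0 < γ - lam.re := sub_pos.2 hγ
  have hbound (s : ℝ) (hs : s ≤ a) := norm_exp_neg_mul_smul_le (z := lam) (hψ s hs)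
  obtain ⟨L, hL, hint, hFTC⟩ := exists_tendsto_atBot_and_integral_Iic_eq_sub hr
    (fun s hs => hasDerivAt_exp_neg_mul_smul (hf s hs)) hbound
  refine ⟨L, hL, fun t ht => ?_⟩
  have hdiff : f t - Complex.exp (lam * t) • L =
      Complex.exp (lam * t) • ∫ s in Set.Iic t, Complex.exp (-(lam * s)) • ψ s := by
    rw [hFTC t ht, smul_sub, exp_mul_smul_exp_neg_mul_smul, sub_self, mul_zero, Complex.exp_zero,
      one_smul]
  simp_rw [← exp_mul_smul_exp_neg_mul_smul, integral_smul, ← hdiff]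
  refine ⟨(hint.mono_set (Set.Iic_subset_Iic.2 ht)).smul _, (add_sub_cancel _ _).symm, ?_⟩
  calc
    ‖f t - Complex.exp (lam * t) • L‖
        = Real.exp (lam.re * t) * ‖∫ s in Set.Iic t, Complex.exp (-(lam * s)) • ψ s‖ := by
      rw [hdiff, norm_exp_mul_ofReal_smul]
    _ ≤ Real.exp (lam.re * t) * (C * Real.exp ((γ - lam.re) * t) / (γ - lam.re)) := by
      gcongr
      exact norm_integral_Iic_le_of_norm_le_mul_exp hr fun s hs => hbound s (hs.trans ht)
    _ = C * Real.exp (γ * t) / (γ - lam.re) := by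
      rw [← mul_div_assoc, mul_left_comm, ← Real.exp_add, ← add_mul, add_sub_cancel]

/-- `E` is a complex Banach space, `λ ∈ ℂ`, `C ≥ 0`, `γ ∈ ℝ` with `Re λ < γ`, `ψ : ℝ → E`
is continuous with `‖ψ(s)‖ ≤ C e^{γs}` for `s ≤ 0`, and `f : ℝ → E` is differentiable
with `f'(t) = λ f(t) + ψ(t)`.  Then the limit `L = lim_{t → −∞} e^{−λt} f(t)` exists,
and for every `t ≤ 0` the Bochner integral `∫_{−∞}^t e^{λ(t−s)} ψ(s) ds` converges
absolutely, `f(t) = e^{λt} L + ∫_{−∞}^t e^{λ(t−s)} ψ(s) ds`, and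
`‖f(t) − e^{λt} L‖ ≤ C e^{γt}/(γ − Re λ)`. -/
theorem stmt_3 {E : Type*} [NormedAddCommGroup E] [NormedSpace ℂ E] [CompleteSpace E]
    (lam : ℂ) (C γ : ℝ) (hC : 0 ≤ C) (hγ : lam.re < γ)
    (ψ : ℝ → E) (hψc : Continuous ψ) (hψ : ∀ s : ℝ, s ≤ 0 → ‖ψ s‖ ≤ C * Real.exp (γ * s))
    (f : ℝ → E) (hf : ∀ t : ℝ, HasDerivAt f (lam • f t + ψ t) t) :
    ∃ L : E, Tendsto (fun t : ℝ => Complex.exp (-(lam * t)) • f t) atBot (nhds L) ∧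
      ∀ t : ℝ, t ≤ 0 →
        IntegrableOn (fun s : ℝ => Complex.exp (lam * (t - s)) • ψ s) (Set.Iic t) ∧
        (f t = Complex.exp (lam * t) • L +
          ∫ s in Set.Iic t, Complex.exp (lam * (t - s)) • ψ s) ∧
        ‖f t - Complex.exp (lam * t) • L‖ ≤ C * Real.exp (γ * t) / (γ - lam.re) := by
  exact stmt_3_general hγ hψ fun t _ => hf t
end

section
/- For every i = 1, …, m and every t ≤ 0, the Bochner integral ∫_{−∞}^{t} e^{(λ_{i−1}−λ_i)s} ψ_{i−1}(s) ds converges absolutely, ψ_i(t) = ∫_{−∞}^{t} e^{(λ_{i−1}−λ_i)s} ψ_{i−1}(s) ds, and ‖ψ_i(t)‖ ≤ C e^{(γ − Re λ_i)t} / ∏_{j=1}^{i} (γ − Re λ_j). -/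
open MeasureTheory Filter

/-!
Suppose `ψ_{i-1}` is bounded by `K e^{(γ - Re λ_{i-1})t}` near `-∞`. The exponential factor in
`ψ_i'` turns this bound into `‖ψ_i'(t)‖ ≤ K e^{(γ - Re λ_i)t}`, which is integrable at `-∞`
because `Re λ_i < γ`. As `ψ_i` vanishes at `-∞`, it is the integral of `ψ_i'`, and integrating the
bound divides the constant by `γ - Re λ_i`; iterating produces the product. Measurability of the
integrands is automatic, since each of them is a derivative.
-/

section

variable {E : Type*} [NormedAddCommGroup E]

theorem integrableOn_of_hasDerivAt_of_norm_le [NormedSpace ℝ E] [CompleteSpace E]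
    {g g' : ℝ → E} {G : ℝ → ℝ} {S : Set ℝ} (hS : MeasurableSet S)
    (hderiv : ∀ s ∈ S, HasDerivAt g (g' s) s) (hG : IntegrableOn G S)
    (hbound : ∀ s ∈ S, ‖g' s‖ ≤ G s) : IntegrableOn g' S := by
  have hmeas : AEStronglyMeasurable g' (volume.restrict S) :=
    (stronglyMeasurable_deriv g).aestronglyMeasurable.congr <|
      ae_restrict_of_forall_mem hS fun s hs => (hderiv s hs).deriv
  exact Integrable.mono' hG hmeas (ae_restrict_of_forall_mem hS hbound)

theorem integrableOn_Iic_of_hasDerivAt_of_norm_le_exp [NormedSpace ℝ E] [CompleteSpace E]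
    {g g' : ℝ → E} {K a t : ℝ} (ha : 0 < a) (hderiv : ∀ s ≤ t, HasDerivAt g (g' s) s)
    (hbound : ∀ s ≤ t, ‖g' s‖ ≤ K * Real.exp (a * s)) : IntegrableOn g' (Set.Iic t) :=
  integrableOn_of_hasDerivAt_of_norm_le measurableSet_Iic hderiv
    ((integrableOn_exp_mul_Iic ha t).const_mul K) hbound

theorem norm_integral_Iic_le_of_norm_le_exp [NormedSpace ℝ E] {f : ℝ → E} {K a t : ℝ}
    (ha : 0 < a) (hbound : ∀ s ≤ t, ‖f s‖ ≤ K * Real.exp (a * s)) :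
    ‖∫ s in Set.Iic t, f s‖ ≤ K / a * Real.exp (a * t) :=
  calc ‖∫ s in Set.Iic t, f s‖
      ≤ ∫ s in Set.Iic t, K * Real.exp (a * s) :=
        norm_integral_le_of_norm_le ((integrableOn_exp_mul_Iic ha t).const_mul K)
          (ae_restrict_of_forall_mem measurableSet_Iic hbound)
    _ = K / a * Real.exp (a * t) := by
        rw [integral_const_mul, integral_exp_mul_Iic ha, mul_div_left_comm, mul_comm]

theorem eq_integral_Iic_of_hasDerivAt_of_norm_le_exp [NormedSpace ℝ E] [CompleteSpace E]
    {g g' : ℝ → E} {K a t : ℝ} (ha : 0 < a) (hderiv : ∀ s ≤ t, HasDerivAt g (g' s) s)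
    (hbound : ∀ s ≤ t, ‖g' s‖ ≤ K * Real.exp (a * s)) (hlim : Tendsto g atBot (nhds 0)) :
    g t = ∫ s in Set.Iic t, g' s := by
  rw [integral_Iic_of_hasDerivAt_of_tendsto' hderiv
    (integrableOn_Iic_of_hasDerivAt_of_norm_le_exp ha hderiv hbound) hlim, sub_zero]

variable [NormedSpace ℂ E]

theorem norm_cexp_smul_le {x : E} {K γ s : ℝ} {z : ℂ} (w : ℂ)
    (hx : ‖x‖ ≤ K * Real.exp ((γ - z.re) * s)) :
    ‖Complex.exp ((z - w) * s) • x‖ ≤ K * Real.exp ((γ - w.re) * s) :=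
  calc ‖Complex.exp ((z - w) * s) • x‖
      = Real.exp ((z.re - w.re) * s) * ‖x‖ := by
        rw [norm_smul, Complex.norm_exp, Complex.re_mul_ofReal, Complex.sub_re]
    _ ≤ Real.exp ((z.re - w.re) * s) * (K * Real.exp ((γ - z.re) * s)) := by gcongr
    _ = K * Real.exp ((γ - w.re) * s) := by
        rw [mul_left_comm, ← Real.exp_add, ← add_mul]
        ring_nf

theorem norm_le_exp_of_hasDerivAt_chain [CompleteSpace E] {n : ℕ} {C γ T : ℝ} {lam : ℕ → ℂ}
    {ψ : ℕ → ℝ → E} (hγ : ∀ i, 1 ≤ i → i ≤ n → (lam i).re < γ)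
    (hψ0 : ∀ t ≤ T, ‖ψ 0 t‖ ≤ C * Real.exp ((γ - (lam 0).re) * t))
    (hderiv : ∀ i, 1 ≤ i → i ≤ n → ∀ t ≤ T,
      HasDerivAt (ψ i) (Complex.exp ((lam (i - 1) - lam i) * t) • ψ (i - 1) t) t)
    (hlim : ∀ i, 1 ≤ i → i ≤ n → Tendsto (ψ i) atBot (nhds 0)) :
    ∀ t ≤ T, ‖ψ n t‖ ≤
      (C / ∏ j ∈ Finset.Icc 1 n, (γ - (lam j).re)) * Real.exp ((γ - (lam n).re) * t) := by
  induction n with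
  | zero => simpa using hψ0
  | succ n ih =>
    intro t ht
    have hpred := ih (fun i hi hin => hγ i hi (by omega)) (fun i hi hin => hderiv i hi (by omega))
      (fun i hi hin => hlim i hi (by omega))
    have hpos : 0 < γ - (lam (n + 1)).re := sub_pos.2 (hγ _ (by omega) le_rfl)
    have hbound : ∀ s ≤ t, ‖Complex.exp ((lam n - lam (n + 1)) * s) • ψ n s‖ ≤
        (C / ∏ j ∈ Finset.Icc 1 n, (γ - (lam j).re)) *
          Real.exp ((γ - (lam (n + 1)).re) * s) :=
      fun s hs => norm_cexp_smul_le (lam (n + 1)) (hpred s (hs.trans ht))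
    rw [Finset.prod_Icc_succ_top (by omega), ← div_div,
      eq_integral_Iic_of_hasDerivAt_of_norm_le_exp hpos
        (fun s hs => hderiv (n + 1) (by omega) le_rfl s (hs.trans ht)) hbound
        (hlim (n + 1) (by omega) le_rfl)]
    exact norm_integral_Iic_le_of_norm_le_exp hpos hbound

theorem stmt_4_general [CompleteSpace E] {m : ℕ} {C γ T : ℝ} {lam : ℕ → ℂ} {ψ : ℕ → ℝ → E}
    (hγ : ∀ i, 1 ≤ i → i ≤ m → (lam i).re < γ)
    (hψ0 : ∀ t ≤ T, ‖ψ 0 t‖ ≤ C * Real.exp ((γ - (lam 0).re) * t))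
    (hderiv : ∀ i, 1 ≤ i → i ≤ m → ∀ t ≤ T,
      HasDerivAt (ψ i) (Complex.exp ((lam (i - 1) - lam i) * t) • ψ (i - 1) t) t)
    (hlim : ∀ i, 1 ≤ i → i ≤ m → Tendsto (ψ i) atBot (nhds 0))
    (i : ℕ) (hi : 1 ≤ i) (him : i ≤ m) (t : ℝ) (ht : t ≤ T) :
    IntegrableOn (fun s : ℝ => Complex.exp ((lam (i - 1) - lam i) * s) • ψ (i - 1) s)
        (Set.Iic t) ∧
      (ψ i t = ∫ s in Set.Iic t, Complex.exp ((lam (i - 1) - lam i) * s) • ψ (i - 1) s) ∧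
      ‖ψ i t‖ ≤ C * Real.exp ((γ - (lam i).re) * t) /
        ∏ j ∈ Finset.Icc 1 i, (γ - (lam j).re) := by
  have hnorm : ∀ k ≤ m, ∀ s ≤ T, ‖ψ k s‖ ≤
      (C / ∏ j ∈ Finset.Icc 1 k, (γ - (lam j).re)) * Real.exp ((γ - (lam k).re) * s) :=
    fun k hk => norm_le_exp_of_hasDerivAt_chain (fun j hj hjk => hγ j hj (hjk.trans hk)) hψ0
      (fun j hj hjk => hderiv j hj (hjk.trans hk)) (fun j hj hjk => hlim j hj (hjk.trans hk))
  have hpos : 0 < γ - (lam i).re := sub_pos.2 (hγ i hi him)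
  have hderiv_i : ∀ s ≤ t,
      HasDerivAt (ψ i) (Complex.exp ((lam (i - 1) - lam i) * s) • ψ (i - 1) s) s :=
    fun s hs => hderiv i hi him s (hs.trans ht)
  have hbound : ∀ s ≤ t, ‖Complex.exp ((lam (i - 1) - lam i) * s) • ψ (i - 1) s‖ ≤
      (C / ∏ j ∈ Finset.Icc 1 (i - 1), (γ - (lam j).re)) * Real.exp ((γ - (lam i).re) * s) :=
    fun s hs => norm_cexp_smul_le (lam i) (hnorm (i - 1) (by omega) s (hs.trans ht))
  refine ⟨integrableOn_Iic_of_hasDerivAt_of_norm_le_exp hpos hderiv_i hbound,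
    eq_integral_Iic_of_hasDerivAt_of_norm_le_exp hpos hderiv_i hbound (hlim i hi him), ?_⟩
  rw [← div_mul_eq_mul_div]
  exact hnorm i him t ht

end

/-- `E` is a complex Banach space, `m ≥ 1`, `C ≥ 0`, `λ_0 = 0`, `λ_1, …, λ_m ∈ ℂ` with
`Re λ_i < γ` for `1 ≤ i ≤ m`; `ψ_0` is continuous with `‖ψ_0(t)‖ ≤ C e^{γt}` for `t ≤ 0`,
and for `1 ≤ i ≤ m`, `ψ_i` is differentiable with `ψ_i'(t) = e^{(λ_{i−1}−λ_i)t} ψ_{i−1}(t)`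
and `ψ_i(t) → 0` as `t → −∞`.  Then for every `1 ≤ i ≤ m` and `t ≤ 0` the Bochner
integral `∫_{−∞}^t e^{(λ_{i−1}−λ_i)s} ψ_{i−1}(s) ds` converges absolutely,
`ψ_i(t)` equals it, and `‖ψ_i(t)‖ ≤ C e^{(γ−Re λ_i)t} / ∏_{j=1}^i (γ − Re λ_j)`. -/
theorem stmt_4 {E : Type*} [NormedAddCommGroup E] [NormedSpace ℂ E] [CompleteSpace E]
    (m : ℕ) (hm : 1 ≤ m) (C γ : ℝ) (hC : 0 ≤ C)
    (lam : ℕ → ℂ) (hlam0 : lam 0 = 0)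
    (hγ : ∀ i : ℕ, 1 ≤ i → i ≤ m → (lam i).re < γ)
    (ψ : ℕ → ℝ → E) (hψ0c : Continuous (ψ 0))
    (hψ0 : ∀ t : ℝ, t ≤ 0 → ‖ψ 0 t‖ ≤ C * Real.exp (γ * t))
    (hderiv : ∀ i : ℕ, 1 ≤ i → i ≤ m → ∀ t : ℝ,
      HasDerivAt (ψ i) (Complex.exp ((lam (i - 1) - lam i) * t) • ψ (i - 1) t) t)
    (hlim : ∀ i : ℕ, 1 ≤ i → i ≤ m → Tendsto (ψ i) atBot (nhds (0 : E))) :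
    ∀ i : ℕ, 1 ≤ i → i ≤ m → ∀ t : ℝ, t ≤ 0 →
      IntegrableOn (fun s : ℝ => Complex.exp ((lam (i - 1) - lam i) * s) • ψ (i - 1) s)
        (Set.Iic t) ∧
      (ψ i t = ∫ s in Set.Iic t, Complex.exp ((lam (i - 1) - lam i) * s) • ψ (i - 1) s) ∧
      ‖ψ i t‖ ≤ C * Real.exp ((γ - (lam i).re) * t) /
        ∏ j ∈ Finset.Icc 1 i, (γ - (lam j).re) :=
  stmt_4_general hγ (by simpa [hlam0] using hψ0)
    (fun i hi him t _ => hderiv i hi him t) hlim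
end

section
/- For all real numbers s ≤ t, |K_m(t,s)| ≤ (t−s)^{m−1} e^{β(t−s)}. -/
open MeasureTheory intervalIntegral

/-!
The weights multiply exactly, `e^{β(t-r)} e^{β(r-s)} = e^{β(t-s)}`, so the integrand defining `K_j`
is at most `e^{β(t-s)}` times the supremum of `(r-s)^{j-2}` over `[s, t]`, and each integration
costs only a factor `t - s`.
-/

section BanachAlgebra

variable {A : Type*}

theorem norm_integral_mul_le_of_norm_le_exp [NonUnitalNormedRing A] [NormedSpace ℝ A]
    {f g : ℝ → A} {s t β C : ℝ} (hst : s ≤ t)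
    (hf : ∀ r ∈ Set.Ioc s t, ‖f r‖ ≤ Real.exp (β * (t - r)))
    (hg : ∀ r ∈ Set.Ioc s t, ‖g r‖ ≤ C * Real.exp (β * (r - s))) :
    ‖∫ r in s..t, f r * g r‖ ≤ C * (t - s) * Real.exp (β * (t - s)) := by
  have norm_integrand_le : ∀ r ∈ Set.uIoc s t, ‖f r * g r‖ ≤ C * Real.exp (β * (t - s)) := by
    intro r hr
    rw [Set.uIoc_of_le hst] at hr
    calc ‖f r * g r‖
        ≤ Real.exp (β * (t - r)) * (C * Real.exp (β * (r - s))) :=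
          norm_mul_le_of_le (hf r hr) (hg r hr)
      _ = C * Real.exp (β * (t - s)) := by
          rw [mul_left_comm, ← Real.exp_add]
          ring_nf
  calc ‖∫ r in s..t, f r * g r‖
      ≤ C * Real.exp (β * (t - s)) * |t - s| := norm_integral_le_of_norm_le_const norm_integrand_le
    _ = C * (t - s) * Real.exp (β * (t - s)) := by
        rw [abs_of_nonneg (sub_nonneg.mpr hst), mul_right_comm]

theorem stmt_5_general [NormedRing A] [NormedAlgebra ℝ A] [CompleteSpace A]
    (m : ℕ) (hm : 1 ≤ m) (a : ℕ → A) (β : ℝ)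
    (ha : ∀ i : ℕ, 1 ≤ i → i ≤ m → ∀ τ : ℝ, 0 ≤ τ →
      ‖NormedSpace.exp (τ • a i)‖ ≤ Real.exp (β * τ))
    (K : ℕ → ℝ → ℝ → A)
    (hK1 : ∀ t s : ℝ, K 1 t s = NormedSpace.exp ((t - s) • a 1))
    (hKsucc : ∀ j : ℕ, 2 ≤ j → j ≤ m → ∀ t s : ℝ,
      K j t s = ∫ r in s..t, NormedSpace.exp ((t - r) • a j) * K (j - 1) r s) :
    ∀ s t : ℝ, s ≤ t → ‖K m t s‖ ≤ (t - s) ^ (m - 1) * Real.exp (β * (t - s)) := by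
  suffices norm_le : ∀ j, 1 ≤ j → j ≤ m → ∀ s t : ℝ, s ≤ t →
      ‖K j t s‖ ≤ (t - s) ^ (j - 1) * Real.exp (β * (t - s)) from norm_le m hm le_rfl
  intro j hj
  induction j, hj using Nat.le_induction with
  | base =>
    intro h1m s t hst
    simpa only [hK1, Nat.sub_self, pow_zero, one_mul] using
      ha 1 le_rfl h1m (t - s) (sub_nonneg.mpr hst)
  | succ j hj ih =>
    intro hjm s t hst
    have norm_K_le : ∀ r ∈ Set.Ioc s t,
        ‖K j r s‖ ≤ (t - s) ^ (j - 1) * Real.exp (β * (r - s)) := by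
      rintro r ⟨hsr, hrt⟩
      have : 0 ≤ r - s := sub_nonneg.mpr hsr.le
      refine (ih (by lia) s r hsr.le).trans ?_
      gcongr
    rw [hKsucc (j + 1) (by lia) hjm, Nat.add_sub_cancel, ← pow_sub_one_mul (by lia : j ≠ 0)]
    exact norm_integral_mul_le_of_norm_le_exp hst
      (fun r hr => ha (j + 1) (by lia) hjm (t - r) (sub_nonneg.mpr hr.2)) norm_K_le

end BanachAlgebra

theorem norm_exp_smul_le_exp_mul {z : ℂ} {β τ : ℝ} (hz : z.re ≤ β) (hτ : 0 ≤ τ) :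
    ‖NormedSpace.exp (τ • z)‖ ≤ Real.exp (β * τ) := by
  rw [← Complex.exp_eq_exp_ℂ, Complex.norm_exp, Complex.smul_re, smul_eq_mul, mul_comm]
  gcongr

/-- `m ≥ 1`, `λ_1, …, λ_m ∈ ℂ`, `β ∈ ℝ` with `Re λ_i ≤ β` for `1 ≤ i ≤ m`.  With
`K_1(t,s) = e^{λ_1(t−s)}` and `K_j(t,s) = ∫_s^t e^{λ_j(t−r)} K_{j−1}(r,s) dr` for
`2 ≤ j ≤ m`, one has `|K_m(t,s)| ≤ (t−s)^{m−1} e^{β(t−s)}` for all `s ≤ t`. -/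
theorem stmt_5 (m : ℕ) (hm : 1 ≤ m) (lam : ℕ → ℂ) (β : ℝ)
    (hβ : ∀ i : ℕ, 1 ≤ i → i ≤ m → (lam i).re ≤ β)
    (K : ℕ → ℝ → ℝ → ℂ)
    (hK1 : ∀ t s : ℝ, K 1 t s = Complex.exp (lam 1 * (t - s)))
    (hKsucc : ∀ j : ℕ, 2 ≤ j → j ≤ m → ∀ t s : ℝ,
      K j t s = ∫ r in s..t, Complex.exp (lam j * (t - r)) * K (j - 1) r s) :
    ∀ s t : ℝ, s ≤ t → ‖K m t s‖ ≤ (t - s) ^ (m - 1) * Real.exp (β * (t - s)) := by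
  exact stmt_5_general m hm lam β (fun i hi him _ => norm_exp_smul_le_exp_mul (hβ i hi him)) K
    (by simpa [← Complex.exp_eq_exp_ℂ, mul_comm] using hK1)
    (by simpa [← Complex.exp_eq_exp_ℂ, mul_comm] using hKsucc)
end

section
/- There exists an open neighborhood B₀ of the identity in G such that Γ ∩ (N·B₀) = Γ ∩ N. -/
open Pointwise

/-!
Since `Γ` is discrete, its points form a locally finite family, so the closure of `Γ \ N` is the
union of the closures of its points. The points of `closure {γ}` are inseparable from `γ`, so this
union misses the closed set `N`. The compact set `F` may be taken inside `N`, so it has a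
neighbourhood `F * B₀` containing no point of `Γ \ N`. Left translation by `Γ ∩ N` preserves
`Γ \ N` and moves `F` over all of `N`, so `N * B₀` contains no point of `Γ \ N` either.
-/

theorem disjoint_closure_sdiff_of_locallyFinite_singleton {X : Type*} [TopologicalSpace X]
    [R0Space X] {S C : Set X} (hS : LocallyFinite fun s : S ↦ ({(s : X)} : Set X))
    (hC : IsClosed C) : Disjoint C (closure (S \ C)) := by
  have hsdiff : LocallyFinite fun s : ↥(S \ C) ↦ ({(s : X)} : Set X) :=
    hS.comp_injective (Set.inclusion_injective Set.sdiff_subset)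
  have hclosure : closure (S \ C) = ⋃ s : ↥(S \ C), closure {(s : X)} := by
    rw [← hsdiff.closure_iUnion, Set.iUnion_of_singleton_coe]
  rw [hclosure, Set.disjoint_iUnion_right]
  refine fun s ↦ Set.disjoint_right.2 fun x hx hxC ↦ s.2.2 ?_
  have hsx : Inseparable (s : X) x := (specializes_iff_mem_closure.2 hx).inseparable
  exact (hsx.mem_closed_iff hC).2 hxC

theorem inter_mul_subset_of_subset_inter_mul {G : Type*} [Group G] {Γ N : Subgroup G} {K B : Set G}
    (hN : (N : Set G) ⊆ ((Γ : Set G) ∩ N) * K) (hK : (Γ : Set G) ∩ (K * B) ⊆ N) :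
    (Γ : Set G) ∩ (N * B) ⊆ N := by
  rintro _ ⟨hγ, n, hn, b, hb, rfl⟩
  obtain ⟨δ, ⟨hδΓ, hδN⟩, k, hk, rfl⟩ := hN hn
  have hkbΓ : k * b ∈ Γ := (Γ.mul_mem_cancel_left hδΓ).1 (mul_assoc δ k b ▸ hγ)
  have hkbN : k * b ∈ N := hK ⟨hkbΓ, Set.mul_mem_mul hk hb⟩
  change δ * k * b ∈ N
  rw [mul_assoc]
  exact N.mul_mem hδN hkbN

section IsTopologicalGroup

open scoped Topology

variable {G : Type*} [Group G] [TopologicalSpace G] [IsTopologicalGroup G]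

theorem locallyFinite_singleton_of_discrete_subgroup (Γ : Subgroup G) [DiscreteTopology Γ] :
    LocallyFinite fun γ : (Γ : Set G) ↦ ({(γ : G)} : Set G) := by
  intro x
  obtain ⟨W, hW, hWΓ⟩ : ∃ W ∈ 𝓝 (1 : G), W ∩ (Γ : Set G) = {1} :=
    nhds_inter_eq_singleton_of_mem_discrete (isDiscrete_iff_discreteTopology.2 ‹_›) Γ.one_mem
  obtain ⟨V, hV, hVW⟩ : ∃ V ∈ 𝓝 x, ∀ v ∈ V, ∀ w ∈ V, v / w ∈ W := by
    have hdiv : (fun p : G × G ↦ p.1 / p.2) ⁻¹' W ∈ 𝓝 (x, x) :=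
      (continuous_fst.div' continuous_snd).continuousAt.preimage_mem_nhds
        (by simpa only [Pi.div_apply, div_self'] using hW)
    simpa only [nhds_prod_eq, Filter.mem_prod_self_iff, Set.prod_subset_iff, Set.mem_preimage]
      using hdiv
  refine ⟨V, hV, Set.Subsingleton.finite fun γ hγ δ hδ ↦ Subtype.ext ?_⟩
  rw [Set.mem_ofPred_eq, Set.singleton_inter_nonempty] at hγ hδ
  have hone : (γ / δ : G) ∈ ({1} : Set G) := hWΓ ▸ ⟨hVW γ hγ δ hδ, Γ.div_mem γ.2 δ.2⟩
  exact div_eq_one.1 hone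

theorem exists_isOpen_subgroup_inter_mul_subset (Γ : Subgroup G) [DiscreteTopology Γ]
    {K C : Set G} (hK : IsCompact K) (hC : IsClosed C) (hKC : K ⊆ C) :
    ∃ B : Set G, IsOpen B ∧ (1 : G) ∈ B ∧ (Γ : Set G) ∩ (K * B) ⊆ C := by
  have hdisj : Disjoint K (closure ((Γ : Set G) \ C)) :=
    (disjoint_closure_sdiff_of_locallyFinite_singleton
      (locallyFinite_singleton_of_discrete_subgroup Γ) hC).mono_left hKC
  obtain ⟨V, hV, hKV⟩ := compact_open_separated_mul_right hK isClosed_closure.isOpen_compl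
    (Set.disjoint_left.1 hdisj)
  obtain ⟨B, hBV, hBopen, hB1⟩ := mem_nhds_iff.1 hV
  refine ⟨B, hBopen, hB1, fun γ ⟨hγ, hγKB⟩ ↦ ?_⟩
  by_contra hγC
  exact hKV (Set.mul_subset_mul_left hBV hγKB) (subset_closure ⟨hγ, hγC⟩)

theorem stmt_9_general (Γ : Subgroup G) [DiscreteTopology Γ] (N : Subgroup G)
    (hNclosed : IsClosed (N : Set G)) {F : Set G} (hF : IsCompact F)
    (hN : (N : Set G) ⊆ ((Γ : Set G) ∩ N) * F) :
    ∃ B₀ : Set G, IsOpen B₀ ∧ (1 : G) ∈ B₀ ∧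
      (Γ : Set G) ∩ ((N : Set G) * B₀) = (Γ : Set G) ∩ (N : Set G) := by
  have hN' : (N : Set G) ⊆ ((Γ : Set G) ∩ N) * (F ∩ N) := by
    intro n hn
    obtain ⟨δ, hδ, f, hf, rfl⟩ := hN hn
    exact Set.mul_mem_mul hδ ⟨hf, (N.mul_mem_cancel_left hδ.2).1 hn⟩
  obtain ⟨B₀, hopen, hone, hsub⟩ := exists_isOpen_subgroup_inter_mul_subset Γ
    (hF.inter_right hNclosed) hNclosed Set.inter_subset_right
  refine ⟨B₀, hopen, hone, Set.Subset.antisymm ?_ ?_⟩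
  · exact Set.subset_inter Set.inter_subset_left (inter_mul_subset_of_subset_inter_mul hN' hsub)
  · exact Set.inter_subset_inter_right _ (Set.subset_mul_left _ hone)

end IsTopologicalGroup

/-- `G` is a locally compact Hausdorff topological group, `Γ` a discrete subgroup, and `N` a
closed subgroup such that `Γ ∩ N` is cocompact in `N` (there is a compact `F ⊆ N` with
`N = (Γ ∩ N)·F`).  Then there is an open neighborhood `B₀` of the identity with
`Γ ∩ (N·B₀) = Γ ∩ N`. -/
theorem stmt_9 {G : Type*} [Group G] [TopologicalSpace G] [IsTopologicalGroup G]
    [T2Space G] [LocallyCompactSpace G]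
    (Γ : Subgroup G) [DiscreteTopology Γ]
    (N : Subgroup G) (hNclosed : IsClosed (N : Set G))
    (hcocompact : ∃ F : Set G, IsCompact F ∧ F ⊆ (N : Set G) ∧
      (N : Set G) = ((Γ : Set G) ∩ (N : Set G)) * F) :
    ∃ B₀ : Set G, IsOpen B₀ ∧ (1 : G) ∈ B₀ ∧
      (Γ : Set G) ∩ ((N : Set G) * B₀) = (Γ : Set G) ∩ (N : Set G) := by
  obtain ⟨F, hF, -, hN⟩ := hcocompact
  exact stmt_9_general Γ N hNclosed hF hN.subset
end

section
/- For every 0 ≤ i ≤ k and all t, s ≤ 0, |Φ_i(t,s)| ≤ |t|^i |s|^{m−1} e^{β(t−s)} e^{−Re(ν_i)t}. -/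
open MeasureTheory intervalIntegral

/-!
Fix `s`. For `s ≤ t ≤ 0` we have `t - s ≤ |s|`, which gives the case `i = 0`. If
`‖f r‖ ≤ A |r|ⁿ e^{γr}` for `r ≤ 0` and `γ + Re μ ≤ 0`, then `e^{(γ + Re μ) r}` is antitone, so on
`[t, 0]` both it and `|r|ⁿ` are largest at `r = t`. Integrating `e^{μr} f(r)` over an interval of
length `|t|` thus adds `1` to `n` and `Re μ` to `γ`. For `μ = ν_i - ν_{i+1}` the increments
telescope to `γ = β - Re ν_i`, and the condition at each step is `β ≤ Re ν_{i+1}`.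
-/

section

variable {E : Type*} [NormedAddCommGroup E]

theorem norm_le_mul_exp_of_monotoneOn {f : ℝ → E} {w : ℝ → ℝ} {β s t : ℝ}
    (hw : MonotoneOn w (Set.Ici 0)) (hzero : ∀ r < s, f r = 0)
    (hbd : ∀ r, s ≤ r → r ≤ 0 → ‖f r‖ ≤ w (r - s) * Real.exp (β * (r - s)))
    (hs : s ≤ 0) (ht : t ≤ 0) :
    ‖f t‖ ≤ w |s| * Real.exp (β * (t - s)) := by
  rw [abs_of_nonpos hs]
  rcases lt_or_ge t s with hts | hst
  · have hw_nonneg : 0 ≤ w (-s) := by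
      have h := (norm_nonneg _).trans (hbd 0 hs le_rfl)
      rw [zero_sub] at h
      exact nonneg_of_mul_nonneg_left h (Real.exp_pos _)
    rw [hzero t hts, norm_zero]
    positivity
  · have hw_le : w (t - s) ≤ w (-s) :=
      hw (sub_nonneg.2 hst) (neg_nonneg.2 hs) (by linarith)
    exact (hbd t hst ht).trans (by gcongr)

variable [NormedSpace ℂ E]

theorem norm_cexp_mul_ofReal_smul (μ : ℂ) (r : ℝ) (x : E) :
    ‖Complex.exp (μ * r) • x‖ = Real.exp (μ.re * r) * ‖x‖ := by
  rw [norm_smul, Complex.norm_exp, Complex.re_mul_ofReal]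

theorem norm_integral_cexp_smul_le {f : ℝ → E} {A γ t : ℝ} {n : ℕ} {μ : ℂ}
    (hA : 0 ≤ A) (hμ : γ + μ.re ≤ 0) (ht : t ≤ 0)
    (hf : ∀ r ∈ Set.Ioc t 0, ‖f r‖ ≤ A * |r| ^ n * Real.exp (γ * r)) :
    ‖∫ r in t..(0 : ℝ), Complex.exp (μ * r) • f r‖ ≤
      A * |t| ^ (n + 1) * Real.exp ((γ + μ.re) * t) := by
  have h_integrand : ∀ r ∈ Set.uIoc t 0,
      ‖Complex.exp (μ * r) • f r‖ ≤ A * |t| ^ n * Real.exp ((γ + μ.re) * t) := by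
    intro r hr
    rw [Set.uIoc_of_le ht] at hr
    have h_abs : |r| ≤ |t| := abs_le_abs_of_nonpos hr.2 hr.1.le
    have h_exp : (γ + μ.re) * r ≤ (γ + μ.re) * t := mul_le_mul_of_nonpos_left hr.1.le hμ
    calc ‖Complex.exp (μ * r) • f r‖
        = Real.exp (μ.re * r) * ‖f r‖ := norm_cexp_mul_ofReal_smul μ r (f r)
      _ ≤ Real.exp (μ.re * r) * (A * |r| ^ n * Real.exp (γ * r)) := by gcongr; exact hf r hr
      _ = A * |r| ^ n * Real.exp ((γ + μ.re) * r) := by rw [add_mul, Real.exp_add]; ring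
      _ ≤ A * |t| ^ n * Real.exp ((γ + μ.re) * t) := by gcongr
  calc ‖∫ r in t..(0 : ℝ), Complex.exp (μ * r) • f r‖
      ≤ A * |t| ^ n * Real.exp ((γ + μ.re) * t) * |0 - t| :=
        norm_integral_le_of_norm_le_const h_integrand
    _ = A * |t| ^ (n + 1) * Real.exp ((γ + μ.re) * t) := by rw [zero_sub, abs_neg]; ring

theorem norm_iterated_integral_cexp_smul_le {φ : ℕ → ℝ → E} {ν : ℕ → ℂ} {β C : ℝ} {k : ℕ}
    (hν : ∀ i < k, β ≤ (ν (i + 1)).re)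
    (hzero : ∀ t ≤ 0, ‖φ 0 t‖ ≤ C * Real.exp ((β - (ν 0).re) * t))
    (hsucc : ∀ i < k, ∀ t ≤ 0,
      φ (i + 1) t = -∫ r in t..(0 : ℝ), Complex.exp ((ν i - ν (i + 1)) * r) • φ i r)
    {i : ℕ} (hi : i ≤ k) {t : ℝ} (ht : t ≤ 0) :
    ‖φ i t‖ ≤ C * |t| ^ i * Real.exp ((β - (ν i).re) * t) := by
  have hC : 0 ≤ C := by simpa using (norm_nonneg _).trans (hzero 0 le_rfl)
  induction i generalizing t with
  | zero => simpa using hzero t ht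
  | succ i ih =>
    have h_rate : β - (ν i).re + (ν i - ν (i + 1)).re = β - (ν (i + 1)).re := by
      rw [Complex.sub_re]; ring
    rw [hsucc i hi t ht, norm_neg, ← h_rate]
    refine norm_integral_cexp_smul_le hC ?_ ht fun r hr => ih (Nat.le_of_succ_le hi) hr.2
    rw [h_rate]
    exact sub_nonpos.2 (hν i hi)

theorem stmt_11_general [CompleteSpace E] {w : ℝ → ℝ} (hw : MonotoneOn w (Set.Ici 0))
    {β : ℝ} {k : ℕ} {ν : ℕ → ℂ} (hν0 : 0 ≤ (ν 0).re) (hν : ∀ i < k, β ≤ (ν (i + 1)).re)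
    {Φ : ℕ → ℝ → ℝ → E}
    (hΦ0meas : StronglyMeasurable (fun q : ℝ × ℝ => Φ 0 q.1 q.2))
    (hΦ0zero : ∀ t s : ℝ, t ≤ 0 → s ≤ 0 → t < s → Φ 0 t s = 0)
    (hΦ0bd : ∀ t s : ℝ, s ≤ t → t ≤ 0 → ‖Φ 0 t s‖ ≤ w (t - s) * Real.exp (β * (t - s)))
    (hΦsucc : ∀ i < k, ∀ t s : ℝ, t ≤ 0 → s ≤ 0 →
      Φ (i + 1) t s = -∫ r in t..(0 : ℝ), Complex.exp ((ν i - ν (i + 1)) * r) • Φ i r s)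
    {i : ℕ} (hi : i ≤ k) {t s : ℝ} (ht : t ≤ 0) (hs : s ≤ 0) :
    ‖Φ i t s‖ ≤ |t| ^ i * w |s| * Real.exp (β * (t - s)) * Real.exp (-(ν i).re * t) := by
  have h_split (j : ℕ) (r : ℝ) : Real.exp (-(β * s)) * Real.exp ((β - (ν j).re) * r) =
      Real.exp (β * (r - s)) * Real.exp (-(ν j).re * r) := by
    simp only [← Real.exp_add]; ring_nf
  have h_initial : ∀ r ≤ 0,
      ‖Φ 0 r s‖ ≤ w |s| * Real.exp (-(β * s)) * Real.exp ((β - (ν 0).re) * r) := by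
    intro r hr
    have h_bound : ‖Φ 0 r s‖ ≤ w |s| * Real.exp (β * (r - s)) :=
      norm_le_mul_exp_of_monotoneOn (f := (Φ 0 · s)) hw
        (fun q hq => hΦ0zero q s (hq.le.trans hs) hs hq) (hΦ0bd · s) hs hr
    have h_one_le : 1 ≤ Real.exp (-(ν 0).re * r) :=
      Real.one_le_exp (mul_nonneg_of_nonpos_of_nonpos (neg_nonpos.2 hν0) hr)
    rw [mul_assoc, h_split, ← mul_assoc]
    exact h_bound.trans (le_mul_of_one_le_right ((norm_nonneg _).trans h_bound) h_one_le)
  calc ‖Φ i t s‖ ≤ w |s| * Real.exp (-(β * s)) * |t| ^ i * Real.exp ((β - (ν i).re) * t) :=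
        norm_iterated_integral_cexp_smul_le (φ := (Φ · · s)) hν h_initial
          (fun j hj r hr => hΦsucc j hj r s hr hs) hi ht
    _ = |t| ^ i * w |s| * (Real.exp (-(β * s)) * Real.exp ((β - (ν i).re) * t)) := by ring
    _ = |t| ^ i * w |s| * Real.exp (β * (t - s)) * Real.exp (-(ν i).re * t) := by
        rw [h_split, mul_assoc _ (Real.exp _)]

end

/-- `m ≥ 1`, `β ∈ ℝ`, `k ≥ 0`, `ν_0 = 0` and `Re ν_j ≥ β` for `1 ≤ j ≤ k`;
`Φ_0` is measurable with `Φ_0(t,s) = 0` for `s > t` and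
`|Φ_0(t,s)| ≤ (t−s)^{m−1} e^{β(t−s)}` for `s ≤ t ≤ 0`; for `0 ≤ i < k`,
`Φ_{i+1}(t,s) = −∫_t^0 e^{(ν_i − ν_{i+1})r} Φ_i(r,s) dr`.  Then for every `0 ≤ i ≤ k`
and all `t, s ≤ 0`, `|Φ_i(t,s)| ≤ |t|^i |s|^{m−1} e^{β(t−s)} e^{−Re(ν_i) t}`. -/
theorem stmt_11 (m : ℕ) (hm : 1 ≤ m) (β : ℝ) (k : ℕ)
    (ν : ℕ → ℂ) (hν0 : ν 0 = 0)
    (hν : ∀ j : ℕ, 1 ≤ j → j ≤ k → β ≤ (ν j).re)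
    (Φ : ℕ → ℝ → ℝ → ℂ)
    (hΦ0meas : Measurable (fun q : ℝ × ℝ => Φ 0 q.1 q.2))
    (hΦ0zero : ∀ t s : ℝ, t ≤ 0 → s ≤ 0 → t < s → Φ 0 t s = 0)
    (hΦ0bd : ∀ t s : ℝ, s ≤ t → t ≤ 0 →
      ‖Φ 0 t s‖ ≤ (t - s) ^ (m - 1) * Real.exp (β * (t - s)))
    (hΦsucc : ∀ i : ℕ, i < k → ∀ t s : ℝ, t ≤ 0 → s ≤ 0 →
      Φ (i + 1) t s = -∫ r in t..(0 : ℝ), Complex.exp ((ν i - ν (i + 1)) * r) * Φ i r s) :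
    ∀ i : ℕ, i ≤ k → ∀ t s : ℝ, t ≤ 0 → s ≤ 0 →
      ‖Φ i t s‖ ≤ |t| ^ i * |s| ^ (m - 1) * Real.exp (β * (t - s)) *
        Real.exp (-(ν i).re * t) := by
  intro i hi t s ht hs
  exact stmt_11_general (w := (· ^ (m - 1))) (fun _ hx _ _ hxy => pow_le_pow_left₀ hx hxy _)
    (by simp [hν0]) (fun j hj => hν (j + 1) j.succ_pos hj) hΦ0meas.stronglyMeasurable
    hΦ0zero hΦ0bd hΦsucc hi ht hs
end
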